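/- The topological complexity of the configuration space of n ≥ 2 ordered distinct points in ℝ³ equals 2n − 1. -/

import Mathlib

/-- The space of continuous paths `[0,1] → X`, with the compact-open topology. -/
abbrev PathSpace (X : Type*) [TopologicalSpace X] := C(unitInterval, X)

/-- `U ⊆ X × X` admits a continuous section of the path fibration
`π : PX → X × X`, `π(γ) = (γ 0, γ 1)`. -/
def HasMotionPlanningSection (X : Type*) [TopologicalSpace X] (U : Set (X × X)) : Prop :=
  ∃ s : C(U, PathSpace X), ∀ p : U, s p 0 = (p : X × X).1 ∧ s p 1 = (p : X × X).2

/-- `X × X` can be covered by `k` open sets, over each of which the path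
fibration admits a continuous section. -/
def HasTCCover (X : Type*) [TopologicalSpace X] (k : ℕ) : Prop :=
  ∃ U : Fin k → Set (X × X), (∀ i, IsOpen (U i)) ∧ (⋃ i, U i) = Set.univ ∧
    ∀ i, HasMotionPlanningSection X (U i)

/-- The topological complexity of `X` (in the unnormalized convention of Farber,
so that `TopComplexity(point) = 1`), as an extended natural number. -/
noncomputable def TopComplexity (X : Type*) [TopologicalSpace X] : ℕ∞ :=
  sInf {N : ℕ∞ | ∃ k : ℕ, N = k ∧ HasTCCover X k}

/-- The configuration space of `n` ordered distinct points in `ℝ^m`. -/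
abbrev ConfSpace (n m : ℕ) := {f : Fin n → (Fin m → ℝ) // Function.Injective f}


/-- The increasing enumeration of `ℕ ∖ {i}`. -/
def skipIndex (i k : ℕ) : ℕ := if k < i then k else k + 1

/-- The coboundary of a cochain of degree `n`, where a cochain on `G` is a function of a sequence of
vertices. -/
def cobd {G : Type*} (n : ℕ) (F : (ℕ → G) → ℤ) (s : ℕ → G) : ℤ :=
  ∑ i ∈ Finset.range (n + 2), (-1) ^ i * F (s ∘ skipIndex i)

theorem cobd_const {G : Type*} (s : ℕ → G) : cobd 0 (fun _ => 1) s = 0 := by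
  simp [cobd, Finset.sum_range_succ]

theorem cobd_cons_two {G : Type*} (A : G → G → G → ℤ) (F : (ℕ → G) → ℤ) (n : ℕ) (s : ℕ → G) :
    cobd (n + 2) (fun s => A (s 0) (s 1) (s 2) * F (fun k => s (k + 2))) s =
      (A (s 1) (s 2) (s 3) - A (s 0) (s 2) (s 3) + A (s 0) (s 1) (s 3) - A (s 0) (s 1) (s 2)) *
        F (fun k => s (k + 3)) + A (s 0) (s 1) (s 2) * cobd n F (fun k => s (k + 2)) := by
  have h3 : ∀ i, (fun k => s (skipIndex (i + 3) (k + 2))) =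
      (fun k => s (k + 2)) ∘ skipIndex (i + 1) := by
    intro i; funext k; simp only [skipIndex, Function.comp]; congr 1; split_ifs <;> omega
  have h0 : (fun k => s (k + 2)) ∘ skipIndex 0 = fun k => s (k + 3) := by
    funext k; simp [skipIndex]
  unfold cobd
  rw [Finset.sum_range_succ', Finset.sum_range_succ', Finset.sum_range_succ',
    Finset.sum_range_succ' _ (n + 1), h0]
  simp only [Function.comp_apply] at h3 ⊢
  have e0 : ∀ k, skipIndex 0 k = k + 1 := fun k => by simp [skipIndex]
  simp only [zero_add, add_assoc, Nat.reduceAdd, h3, e0]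
  have e1 : skipIndex 1 0 = 0 ∧ skipIndex 1 1 = 2 ∧ skipIndex 1 2 = 3 ∧
      skipIndex 2 0 = 0 ∧ skipIndex 2 1 = 1 ∧ skipIndex 2 2 = 3 := by decide
  have e3 : ∀ i, skipIndex (i + 3) 0 = 0 ∧ skipIndex (i + 3) 1 = 1 ∧ skipIndex (i + 3) 2 = 2 := by
    intro i; simp [skipIndex]
  have e1' : ∀ k, skipIndex 1 (k + 2) = k + 3 := fun k => by simp [skipIndex]
  have e2' : ∀ k, skipIndex 2 (k + 2) = k + 3 := fun k => by simp [skipIndex]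
  simp only [e1, e3, e1', e2', mul_add, Finset.mul_sum]
  have : ∀ i (x : ℤ), (-1) ^ (i + 3) * (A (s 0) (s 1) (s 2) * x) =
      A (s 0) (s 1) (s 2) * ((-1) ^ (i + 1) * x) := by intro i x; ring
  simp only [this]
  ring

theorem cobd_cons_one {G : Type*} (b : G → G → ℤ) (F : (ℕ → G) → ℤ) (n : ℕ) (s : ℕ → G) :
    cobd (n + 1) (fun s => b (s 0) (s 1) * F (fun k => s (k + 1))) s =
      (b (s 1) (s 2) - b (s 0) (s 2) + b (s 0) (s 1)) *
        F (fun k => s (k + 2)) - b (s 0) (s 1) * cobd n F (fun k => s (k + 1)) := by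
  have h3 : ∀ i, (fun k => s (skipIndex (i + 2) (k + 1))) =
      (fun k => s (k + 1)) ∘ skipIndex (i + 1) := by
    intro i; funext k; simp only [skipIndex, Function.comp]; congr 1; split_ifs <;> omega
  have h0 : (fun k => s (k + 1)) ∘ skipIndex 0 = fun k => s (k + 2) := by
    funext k; simp [skipIndex]
  unfold cobd
  rw [Finset.sum_range_succ', Finset.sum_range_succ', 
    Finset.sum_range_succ' _ (n + 1), h0]
  simp only [Function.comp_apply] at h3 ⊢
  have e0 : ∀ k, skipIndex 0 k = k + 1 := fun k => by simp [skipIndex]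
  simp only [zero_add, add_assoc, Nat.reduceAdd, h3, e0]
  have e1 : skipIndex 1 0 = 0 ∧ skipIndex 1 1 = 2 := by decide
  have e3 : ∀ i, skipIndex (i + 2) 0 = 0 ∧ skipIndex (i + 2) 1 = 1 := by
    intro i; simp [skipIndex]
  have e1' : ∀ k, skipIndex 1 (k + 1) = k + 2 := fun k => by simp [skipIndex]
  simp only [e1, e3, e1', mul_add, Finset.mul_sum]
  have : ∀ i (x : ℤ), (-1) ^ (i + 2) * (b (s 0) (s 1) * x) =
      - (b (s 0) (s 1) * ((-1) ^ (i + 1) * x)) := by intro i x; ring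
  simp only [this, Finset.sum_neg_distrib]
  ring

/-- The cup product of a list of 2-cochains, as a function of a sequence of vertices. -/
def cupList {G : Type*} : List (G → G → G → ℤ) → (ℕ → G) → ℤ
  | [], _ => 1
  | A :: l, s => A (s 0) (s 1) (s 2) * cupList l (fun k => s (k + 2))

/-- The 2-cochain `A` is closed on consecutive vertices of `s`. -/
def ClosedAlong {G : Type*} (A : G → G → G → ℤ) (s : ℕ → G) : Prop :=
  ∀ k, A (s (k + 1)) (s (k + 2)) (s (k + 3)) - A (s k) (s (k + 2)) (s (k + 3)) +
    A (s k) (s (k + 1)) (s (k + 3)) - A (s k) (s (k + 1)) (s (k + 2)) = 0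

theorem ClosedAlong.shift {G : Type*} {A : G → G → G → ℤ} {s : ℕ → G} (h : ClosedAlong A s)
    (i : ℕ) : ClosedAlong A (fun k => s (k + i)) := fun k => by
  have := h (k + i)
  simp only [show ∀ a, k + i + a = k + a + i from fun a => by omega] at this
  exact this

theorem cobd_cupList {G : Type*} (l : List (G → G → G → ℤ)) (s : ℕ → G)
    (h : ∀ A ∈ l, ClosedAlong A s) : cobd (2 * l.length) (cupList l) s = 0 := by
  induction l generalizing s with
  | nil => exact cobd_const s
  | cons A l ih =>
    have := cobd_cons_two A (cupList l) (2 * l.length) s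
    have h0 := h A (by simp) 0
    simp only [zero_add] at h0
    rw [h0, ih _ (fun B hB => (h B (by simp [hB])).shift 2)] at this
    simpa [cupList, mul_add] using this

/-- The product of 2-cochains `l₁`, a 1-cochain `b`, and 2-cochains `l₂`. -/
def cupInsert {G : Type*} (b : G → G → ℤ) (l₂ : List (G → G → G → ℤ)) :
    List (G → G → G → ℤ) → (ℕ → G) → ℤ
  | [], s => b (s 0) (s 1) * cupList l₂ (fun k => s (k + 1))
  | A :: l, s => A (s 0) (s 1) (s 2) * cupInsert b l₂ l (fun k => s (k + 2))

theorem cobd_cupInsert {G : Type*} (b : G → G → ℤ) (l₁ l₂ : List (G → G → G → ℤ)) (s : ℕ → G)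
    (h₁ : ∀ A ∈ l₁, ClosedAlong A s) (h₂ : ∀ A ∈ l₂, ClosedAlong A s) :
    cobd (2 * l₁.length + 2 * l₂.length + 1) (cupInsert b l₂ l₁) s =
      cupList (l₁ ++ (fun x y z => b y z - b x z + b x y) :: l₂) s := by
  induction l₁ generalizing s with
  | nil =>
    have := cobd_cons_one b (cupList l₂) (2 * l₂.length) s
    rw [cobd_cupList _ _ (fun B hB => (h₂ B (by simp [hB])).shift 1)] at this
    simpa [cupInsert, cupList] using this
  | cons A l ih =>
    have := cobd_cons_two A (cupInsert b l₂ l) (2 * l.length + 2 * l₂.length + 1) s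
    have h0 := h₁ A (by simp) 0
    simp only [zero_add] at h0
    rw [h0, ih _ (fun B hB => (h₁ B (by simp [hB])).shift 2) (fun B hB => (h₂ B hB).shift 2)] at this
    have e : 2 * (A :: l).length + 2 * l₂.length + 1 =
      2 * l.length + 2 * l₂.length + 1 + 2 := by simp; ring
    rw [e]
    simpa [cupInsert, cupList] using this

theorem cupList_congr {G : Type*} (l : List (G → G → G → ℤ)) (s s' : ℕ → G)
    (h : ∀ k ≤ 2 * l.length, s k = s' k) : cupList l s = cupList l s' := by
  induction l generalizing s s' with
  | nil => rfl
  | cons A l ih =>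
    simp only [List.length_cons] at h
    simp only [cupList]
    rw [h 0 (by omega), h 1 (by omega), h 2 (by omega), ih _ _ (fun k hk => h (k + 2) (by omega))]

theorem cupInsert_congr {G : Type*} (b : G → G → ℤ) (l₁ l₂ : List (G → G → G → ℤ)) (s s' : ℕ → G)
    (h : ∀ k ≤ 2 * l₁.length + 2 * l₂.length + 1, s k = s' k) :
    cupInsert b l₂ l₁ s = cupInsert b l₂ l₁ s' := by
  induction l₁ generalizing s s' with
  | nil =>
    simp only [List.length_nil] at h
    simp only [cupInsert]
    rw [h 0 (by omega), h 1 (by omega), cupList_congr _ _ _ (fun k hk => h (k + 1) (by omega))]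
  | cons A l ih =>
    simp only [List.length_cons] at h
    simp only [cupInsert]
    rw [h 0 (by omega), h 1 (by omega), h 2 (by omega), ih _ _ (fun k hk => h (k + 2) (by omega))]

theorem cupList_append_cons_sub {G : Type*} (A B : G → G → G → ℤ) (l₁ l₂ : List (G → G → G → ℤ))
    (s : ℕ → G) : cupList (l₁ ++ (fun x y z => A x y z - B x y z) :: l₂) s =
      cupList (l₁ ++ A :: l₂) s - cupList (l₁ ++ B :: l₂) s := by
  induction l₁ generalizing s with
  | nil => simp [cupList, sub_mul]
  | cons A l ih => simp [cupList, ih, mul_sub]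

theorem cupList_ofFn {G : Type*} {M : ℕ} (A : Fin M → G → G → G → ℤ) (s : ℕ → G) :
    cupList (List.ofFn A) s = ∏ j : Fin M, A j (s (2 * j)) (s (2 * j + 1)) (s (2 * j + 2)) := by
  induction M generalizing s with
  | zero => simp [cupList]
  | succ M ih =>
    rw [List.ofFn_succ, Fin.prod_univ_succ, cupList, ih]
    simp [mul_add, add_comm, add_left_comm]

/-- The vertices of the simplex of the Kuhn triangulation of a torus grid which starts at `x` and
moves in the directions `σ 0, σ 1, …`. -/
def kuhnPath {d N : ℕ} (x : Fin d → ZMod N) (σ : Equiv.Perm (Fin d)) (k : ℕ) : Fin d → ZMod N :=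
  fun e => x e + if (σ⁻¹ e : ℕ) < k then 1 else 0

/-- Evaluation on the fundamental cycle of a torus grid. -/
def kuhnSum {d N : ℕ} [NeZero N] (F : (ℕ → Fin d → ZMod N) → ℤ) : ℤ :=
  ∑ x : Fin d → ZMod N, ∑ σ : Equiv.Perm (Fin d), (Equiv.Perm.sign σ : ℤ) * F (kuhnPath x σ)

theorem kuhnSum_cobd {e N : ℕ} [NeZero N] (F : (ℕ → Fin (e + 1) → ZMod N) → ℤ)
    (hF : ∀ s s' : ℕ → Fin (e + 1) → ZMod N, (∀ k ≤ e, s k = s' k) → F s = F s') :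
    kuhnSum (cobd e F) = 0 := by
  have hmid : ∀ i, 0 < i → i < e + 1 → kuhnSum (fun s => F (s ∘ skipIndex i)) = 0 := by
    intro i h0 hi
    unfold kuhnSum
    refine Finset.sum_eq_zero fun x _ => ?_
    set a : Fin (e + 1) := ⟨i - 1, by omega⟩ with ha
    set b : Fin (e + 1) := ⟨i, hi⟩ with hb
    have hab : a ≠ b := by simp [ha, hb, Fin.ext_iff]; omega
    have hp : ∀ σ : Equiv.Perm (Fin (e + 1)),
        kuhnPath x (σ * Equiv.swap a b) ∘ skipIndex i = kuhnPath x σ ∘ skipIndex i := by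
      intro σ; funext k c
      simp only [Function.comp, kuhnPath, mul_inv_rev, Equiv.swap_inv, Equiv.Perm.mul_apply]
      congr 2
      simp only [Equiv.swap_apply_def, skipIndex]
      generalize σ⁻¹ c = y
      simp only [ha, hb, Fin.ext_iff]
      split_ifs <;> simp_all <;> omega
    have key := Equiv.sum_comp (Equiv.mulRight (Equiv.swap a b))
      (fun σ : Equiv.Perm (Fin (e + 1)) => (Equiv.Perm.sign σ : ℤ) *
        F (kuhnPath x σ ∘ skipIndex i))
    simp only [Equiv.coe_mulRight, hp, Equiv.Perm.sign_mul, Equiv.Perm.sign_swap hab] at key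
    simp at key
    linarith
  have hlast : kuhnSum (fun s => F (s ∘ skipIndex (e + 1))) = kuhnSum F := by
    unfold kuhnSum
    refine Finset.sum_congr rfl fun x _ => Finset.sum_congr rfl fun σ _ => ?_
    congr 1
    refine hF _ _ fun k hk => ?_
    simp [skipIndex, show k < e + 1 by omega]
  have hfirst : kuhnSum (fun s => F (s ∘ skipIndex 0)) = (-1) ^ e * kuhnSum F := by
    have hp : ∀ x (σ : Equiv.Perm (Fin (e + 1))), F (kuhnPath x σ ∘ skipIndex 0) =
        F (kuhnPath (x + Pi.single (σ 0) 1) (σ * finRotate (e + 1))) := by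
      intro x σ
      refine hF _ _ fun k hk => ?_
      funext c
      have hs : ∀ (τ : Equiv.Perm (Fin (e + 1))) y, τ⁻¹ (τ y) = y := fun τ y => τ.symm_apply_apply y
      have hk : skipIndex 0 k = k + 1 := by simp [skipIndex]
      simp only [kuhnPath, Function.comp, hk, mul_inv_rev, Equiv.Perm.mul_apply, Pi.add_apply]
      obtain ⟨y, rfl⟩ := σ.surjective c
      obtain ⟨z, rfl⟩ := (finRotate (e + 1)).surjective y
      simp only [hs]
      rcases eq_or_ne z (Fin.last e) with rfl | hz
      · simp [show ¬ e < k by omega]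
      · have h1 : ((finRotate (e + 1) z : Fin (e + 1)) : ℕ) = z + 1 := by
          rw [coe_finRotate_of_ne_last hz]
        have h2 : finRotate (e + 1) z ≠ 0 := by
          intro h; rw [h] at h1; simp at h1
        rw [Pi.single_apply, if_neg (fun h => h2 (σ.injective h))]
        simp only [h1, add_zero, Nat.add_lt_add_iff_right]
    unfold kuhnSum
    simp only [hp]
    rw [Finset.sum_comm]
    have : ∀ σ : Equiv.Perm (Fin (e + 1)), ∑ x : Fin (e + 1) → ZMod N, (Equiv.Perm.sign σ : ℤ) *
        F (kuhnPath (x + Pi.single (σ 0) 1) (σ * finRotate (e + 1))) =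
        ∑ x : Fin (e + 1) → ZMod N, (Equiv.Perm.sign σ : ℤ) *
          F (kuhnPath x (σ * finRotate (e + 1))) := fun σ =>
      Equiv.sum_comp (Equiv.addRight (Pi.single (σ 0) (1 : ZMod N))) (fun x =>
        (Equiv.Perm.sign σ : ℤ) * F (kuhnPath x (σ * finRotate (e + 1))))
    simp only [this]
    rw [Finset.sum_comm, Finset.mul_sum]
    refine Finset.sum_congr rfl fun x _ => ?_
    have key := Equiv.sum_comp (Equiv.mulRight (finRotate (e + 1)))
      (fun σ : Equiv.Perm (Fin (e + 1)) => (Equiv.Perm.sign σ : ℤ) * F (kuhnPath x σ))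
    rw [← key, Finset.mul_sum]
    refine Finset.sum_congr rfl fun σ _ => ?_
    simp only [Equiv.coe_mulRight, Equiv.Perm.sign_mul, sign_finRotate]
    push_cast
    rw [mul_comm (Equiv.Perm.sign σ : ℤ) ((-1) ^ e), ← mul_assoc, ← mul_assoc, ← mul_pow]
    simp
  have hsum : kuhnSum (cobd e F) =
      ∑ i ∈ Finset.range (e + 2), (-1) ^ i * kuhnSum (fun s => F (s ∘ skipIndex i)) := by
    unfold kuhnSum cobd
    simp only [Finset.mul_sum]
    rw [Finset.sum_comm]
    simp only [Finset.sum_comm (s := (Finset.univ : Finset (Fin (e+1) → ZMod N)))]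
    rw [Finset.sum_comm]
    refine Finset.sum_congr rfl fun i _ => Finset.sum_congr rfl fun σ _ =>
      Finset.sum_congr rfl fun x _ => by ring
  rw [hsum, Finset.sum_range_succ, Finset.sum_range_succ', hlast, hfirst,
    Finset.sum_eq_zero fun i hi => ?_]
  · ring
  · rw [hmid _ (by omega) (by simp at hi; omega), mul_zero]

/-- The 2-cochain on the boundary of a tetrahedron which is dual to the face `012`. -/
def faceSign (a b c : Fin 4) : ℤ :=
  if (a = 0 ∧ b = 1 ∧ c = 2) ∨ (a = 1 ∧ b = 2 ∧ c = 0) ∨ (a = 2 ∧ b = 0 ∧ c = 1) then 1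
  else if (a = 1 ∧ b = 0 ∧ c = 2) ∨ (a = 0 ∧ b = 2 ∧ c = 1) ∨ (a = 2 ∧ b = 1 ∧ c = 0) then -1
  else 0

theorem faceSign_closed : ∀ m a b c d : Fin 4, a ≠ m → b ≠ m → c ≠ m → d ≠ m →
    faceSign b c d - faceSign a c d + faceSign a b d - faceSign a b c = 0 := by
  have h : ∀ a b c d : Fin 4,
      faceSign b c d - faceSign a c d + faceSign a b d - faceSign a b c = 0 ∨
      ∀ m, a = m ∨ b = m ∨ c = m ∨ d = m := by decide
  intro m a b c d ha hb hc hd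
  rcases h a b c d with h | h
  · exact h
  · have := h m; tauto

/-- The prism operator for `faceSign` on an edge moving from `xy` to `x'y'`. -/
def facePrism (x y x' y' : Fin 4) : ℤ := faceSign x x' y' - faceSign x y y'

theorem facePrism_cobd (m a b c a' b' c' : Fin 4) (ha : a ≠ m) (hb : b ≠ m) (hc : c ≠ m)
    (ha' : a' ≠ m) (hb' : b' ≠ m) (hc' : c' ≠ m) :
    faceSign a' b' c' - faceSign a b c =
      facePrism b c b' c' - facePrism a c a' c' + facePrism a b a' b' := by
  have h1 := faceSign_closed m a b c c' ha hb hc hc'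
  have h2 := faceSign_closed m a b b' c' ha hb hb' hc'
  have h3 := faceSign_closed m a a' b' c' ha ha' hb' hc'
  unfold facePrism
  linarith

theorem faceSign_self_left (a b : Fin 4) : faceSign a a b = 0 := by revert a b; decide

theorem faceSign_self_right (a b : Fin 4) : faceSign a b b = 0 := by revert a b; decide

/-- The 2-cochain on the torus grid with coordinates indexed by `Fin M × Fin 2` which is pulled
back from the labelling `lab` of the `t`-th two-dimensional factor. -/
def torusFace {M N : ℕ} (lab : ZMod N → ZMod N → Fin 4) (t : Fin M)
    (x y z : Fin (M * 2) → ZMod N) : ℤ :=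
  faceSign (lab (x (finProdFinEquiv (t, 0))) (x (finProdFinEquiv (t, 1))))
    (lab (y (finProdFinEquiv (t, 0))) (y (finProdFinEquiv (t, 1))))
    (lab (z (finProdFinEquiv (t, 0))) (z (finProdFinEquiv (t, 1))))

/-- The contribution to the degree of a labelling of one square of a two-dimensional grid. -/
def squareDegree {N : ℕ} (lab : ZMod N → ZMod N → Fin 4) (a b : ZMod N) : ℤ :=
  faceSign (lab a b) (lab (a + 1) b) (lab (a + 1) (b + 1)) -
    faceSign (lab a b) (lab a (b + 1)) (lab (a + 1) (b + 1))

/-- The degree of a labelling of a two-dimensional torus grid. -/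
def gridDegree {N : ℕ} [NeZero N] (lab : ZMod N → ZMod N → Fin 4) : ℤ :=
  ∑ a, ∑ b, squareDegree lab a b

/-- A factor `t` on which a Kuhn simplex has nonzero face sign at the `j`-th pair of steps is
traversed by exactly that pair of steps. -/
theorem div_two_of_torusFace_ne_zero {M N : ℕ} {lab : ZMod N → ZMod N → Fin 4} {t j : Fin M}
    {x : Fin (M * 2) → ZMod N} {σ : Equiv.Perm (Fin (M * 2))}
    (h : torusFace lab t (kuhnPath x σ (2 * j)) (kuhnPath x σ (2 * j + 1))
      (kuhnPath x σ (2 * j + 2)) ≠ 0) (ε : Fin 2) :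
    (finProdFinEquiv.symm (σ⁻¹ (finProdFinEquiv (t, ε)))).1 = j := by
  have hne : σ⁻¹ (finProdFinEquiv (t, 0)) ≠ σ⁻¹ (finProdFinEquiv (t, 1)) := by
    intro h; simpa using finProdFinEquiv.injective (σ⁻¹.injective h)
  have hne' : (σ⁻¹ (finProdFinEquiv (t, 0)) : ℕ) ≠ (σ⁻¹ (finProdFinEquiv (t, 1)) : ℕ) :=
    fun h => hne (Fin.ext h)
  have key : (σ⁻¹ (finProdFinEquiv (t, ε)) : ℕ) / 2 = j := by
    by_contra hcon
    apply h
    obtain hε | hε : ε = 0 ∨ ε = 1 := by clear hcon; revert ε; decide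
    all_goals
      rw [hε] at hcon
      unfold torusFace kuhnPath
      generalize (σ⁻¹ (finProdFinEquiv (t, 0)) : ℕ) = p at *
      generalize (σ⁻¹ (finProdFinEquiv (t, 1)) : ℕ) = q at *
    · have e1 : p < 2 * (j : ℕ) + 1 ↔ p < 2 * (j : ℕ) := by omega
      have e2 : p < 2 * (j : ℕ) + 2 ↔ p < 2 * (j : ℕ) := by omega
      simp only [e1, e2]
      by_cases hq : q = 2 * (j : ℕ)
      · have e3 : q < 2 * (j : ℕ) + 1 ↔ q < 2 * (j : ℕ) + 2 := by omega
        simp only [e3, faceSign_self_right]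
      · have e3 : q < 2 * (j : ℕ) + 1 ↔ q < 2 * (j : ℕ) := by omega
        simp only [e3, faceSign_self_left]
    · have e1 : q < 2 * (j : ℕ) + 1 ↔ q < 2 * (j : ℕ) := by omega
      have e2 : q < 2 * (j : ℕ) + 2 ↔ q < 2 * (j : ℕ) := by omega
      simp only [e1, e2]
      by_cases hq : p = 2 * (j : ℕ)
      · have e3 : p < 2 * (j : ℕ) + 1 ↔ p < 2 * (j : ℕ) + 2 := by omega
        simp only [e3, faceSign_self_right]
      · have e3 : p < 2 * (j : ℕ) + 1 ↔ p < 2 * (j : ℕ) := by omega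
        simp only [e3, faceSign_self_left]
  exact Fin.ext (by simpa [finProdFinEquiv] using key)


/-- The permutation of `Fin (M * 2)` which permutes the pairs by `w` and each pair by `κ`. -/
def blockPerm {M : ℕ} (w : Equiv.Perm (Fin M)) (κ : Fin M → Equiv.Perm (Fin 2)) :
    Equiv.Perm (Fin (M * 2)) :=
  finProdFinEquiv.permCongr
    ((Equiv.prodCongrRight κ).trans (Equiv.prodCongrLeft fun _ => w))

theorem blockPerm_apply {M : ℕ} (w : Equiv.Perm (Fin M)) (κ : Fin M → Equiv.Perm (Fin 2))
    (j : Fin M) (ε : Fin 2) :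
    blockPerm w κ (finProdFinEquiv (j, ε)) = finProdFinEquiv (w j, κ j ε) := by
  simp [blockPerm, Equiv.permCongr_apply]

theorem sign_blockPerm {M : ℕ} (w : Equiv.Perm (Fin M)) (κ : Fin M → Equiv.Perm (Fin 2)) :
    Equiv.Perm.sign (blockPerm w κ) = ∏ j, Equiv.Perm.sign (κ j) := by
  rw [blockPerm, Equiv.Perm.sign_permCongr, Equiv.Perm.sign_trans, Equiv.Perm.sign_prodCongrLeft,
    Equiv.Perm.sign_prodCongrRight]
  simp

theorem torusFace_blockPerm {M N : ℕ} (lab : ZMod N → ZMod N → Fin 4) (w : Equiv.Perm (Fin M))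
    (κ : Fin M → Equiv.Perm (Fin 2)) (j : Fin M) (x : Fin (M * 2) → ZMod N) :
    torusFace lab (w j) (kuhnPath x (blockPerm w κ) (2 * j)) (kuhnPath x (blockPerm w κ) (2 * j + 1))
      (kuhnPath x (blockPerm w κ) (2 * j + 2)) =
    if κ j = 1 then
      faceSign (lab (x (finProdFinEquiv (w j, 0))) (x (finProdFinEquiv (w j, 1))))
        (lab (x (finProdFinEquiv (w j, 0)) + 1) (x (finProdFinEquiv (w j, 1))))
        (lab (x (finProdFinEquiv (w j, 0)) + 1) (x (finProdFinEquiv (w j, 1)) + 1))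
    else
      faceSign (lab (x (finProdFinEquiv (w j, 0))) (x (finProdFinEquiv (w j, 1))))
        (lab (x (finProdFinEquiv (w j, 0))) (x (finProdFinEquiv (w j, 1)) + 1))
        (lab (x (finProdFinEquiv (w j, 0)) + 1) (x (finProdFinEquiv (w j, 1)) + 1)) := by
  have hs : ∀ (τ : Equiv.Perm (Fin (M * 2))) y, τ⁻¹ (τ y) = y := fun τ y => τ.symm_apply_apply y
  have hinv : ∀ ε, (blockPerm w κ)⁻¹ (finProdFinEquiv (w j, κ j ε)) = finProdFinEquiv (j, ε) := by
    intro ε; rw [← blockPerm_apply, hs]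
  have hκ : κ j = 1 ∨ κ j = Equiv.swap 0 1 := by
    generalize κ j = τ; revert τ; decide
  have h0 := hinv 0
  have h1 := hinv 1
  have hlt : 1 + 2 * (j : ℕ) < 2 * j + 2 := by omega
  rcases hκ with hκ | hκ
  · rw [hκ] at h0 h1
    simp only [Equiv.Perm.one_apply] at h0 h1
    simp [torusFace, kuhnPath, h0, h1, hκ, hlt]
  · rw [hκ] at h0 h1
    simp only [Equiv.swap_apply_left, Equiv.swap_apply_right] at h0 h1
    have hne : (Equiv.swap 0 1 : Equiv.Perm (Fin 2)) ≠ 1 := by decide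
    simp [torusFace, kuhnPath, h0, h1, hκ, hne, hlt]

theorem exists_blockPerm {M N : ℕ} {lab : ZMod N → ZMod N → Fin 4} {w : Equiv.Perm (Fin M)}
    {x : Fin (M * 2) → ZMod N} {σ : Equiv.Perm (Fin (M * 2))}
    (h : ∀ j : Fin M, torusFace lab (w j) (kuhnPath x σ (2 * j)) (kuhnPath x σ (2 * j + 1))
      (kuhnPath x σ (2 * j + 2)) ≠ 0) : ∃ κ, blockPerm w κ = σ := by
  have hs : ∀ (τ : Equiv.Perm (Fin (M * 2))) y, τ (τ⁻¹ y) = y := fun τ y => τ.apply_symm_apply y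
  have h1 := fun j => div_two_of_torusFace_ne_zero (h j)
  have h2 : ∀ j ε, ∃ δ, σ⁻¹ (finProdFinEquiv (w j, ε)) = finProdFinEquiv (j, δ) := by
    intro j ε
    refine ⟨(finProdFinEquiv.symm (σ⁻¹ (finProdFinEquiv (w j, ε)))).2, ?_⟩
    rw [← Equiv.symm_apply_eq]
    exact Prod.ext (h1 j ε) rfl
  choose f hf using h2
  have hinj : ∀ j, Function.Injective (f j) := by
    intro j a b hab
    have := (hf j a).trans ((congrArg (fun δ => finProdFinEquiv (j, δ)) hab).trans (hf j b).symm)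
    simpa using finProdFinEquiv.injective (σ⁻¹.injective this)
  refine ⟨fun j => (Equiv.ofBijective (f j) (Finite.injective_iff_bijective.mp (hinj j))).symm, ?_⟩
  ext1 y
  obtain ⟨⟨j, δ⟩, rfl⟩ := finProdFinEquiv.surjective y
  rw [blockPerm_apply]
  set e := Equiv.ofBijective (f j) (Finite.injective_iff_bijective.mp (hinj j)) with he
  have : δ = f j (e.symm δ) := (e.apply_symm_apply δ).symm
  conv_rhs => rw [this, ← hf, hs]

theorem kuhnSum_prod_torusFace_of_not_injective {M N : ℕ} [NeZero N]
    (lab : ZMod N → ZMod N → Fin 4) (v : Fin M → Fin M) (hv : ¬ Function.Injective v) :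
    kuhnSum (fun s => ∏ j : Fin M, torusFace lab (v j) (s (2 * j)) (s (2 * j + 1))
      (s (2 * j + 2))) = 0 := by
  refine Finset.sum_eq_zero fun x _ => Finset.sum_eq_zero fun σ _ => ?_
  by_contra hne
  apply hv
  intro i j hij
  have h1 := Finset.prod_ne_zero_iff.mp (right_ne_zero_of_mul hne)
  have hi := div_two_of_torusFace_ne_zero (h1 i (Finset.mem_univ _)) 0
  have hj := div_two_of_torusFace_ne_zero (h1 j (Finset.mem_univ _)) 0
  rw [← hi, ← hj, hij]

theorem kuhnSum_prod_torusFace {M N : ℕ} [NeZero N]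
    (lab : ZMod N → ZMod N → Fin 4) (w : Equiv.Perm (Fin M)) :
    kuhnSum (fun s => ∏ j : Fin M, torusFace lab (w j) (s (2 * j)) (s (2 * j + 1))
      (s (2 * j + 2))) = gridDegree lab ^ M := by
  have hx : ∀ x : Fin (M * 2) → ZMod N, ∑ σ : Equiv.Perm (Fin (M * 2)),
      (Equiv.Perm.sign σ : ℤ) * ∏ j : Fin M, torusFace lab (w j) (kuhnPath x σ (2 * j))
        (kuhnPath x σ (2 * j + 1)) (kuhnPath x σ (2 * j + 2)) =
      ∏ t : Fin M, squareDegree lab (x (finProdFinEquiv (t, 0))) (x (finProdFinEquiv (t, 1))) := by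
    intro x
    rw [← Finset.sum_of_injOn (s := (Finset.univ : Finset (Fin M → Equiv.Perm (Fin 2))))
      (f := fun κ => ∏ j, ((Equiv.Perm.sign (κ j) : ℤ) *
        torusFace lab (w j) (kuhnPath x (blockPerm w κ) (2 * j))
          (kuhnPath x (blockPerm w κ) (2 * j + 1)) (kuhnPath x (blockPerm w κ) (2 * j + 2))))
      (blockPerm w)]
    · rw [← Equiv.prod_comp w]
      simp only [torusFace_blockPerm]
      rw [← Fintype.piFinset_univ, ← Finset.prod_univ_sum (fun _ => Finset.univ)
        (fun (j : Fin M) (τ : Equiv.Perm (Fin 2)) => (Equiv.Perm.sign τ : ℤ) * (if τ = 1 then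
          faceSign (lab (x (finProdFinEquiv (w j, 0))) (x (finProdFinEquiv (w j, 1))))
            (lab (x (finProdFinEquiv (w j, 0)) + 1) (x (finProdFinEquiv (w j, 1))))
            (lab (x (finProdFinEquiv (w j, 0)) + 1) (x (finProdFinEquiv (w j, 1)) + 1))
        else
          faceSign (lab (x (finProdFinEquiv (w j, 0))) (x (finProdFinEquiv (w j, 1))))
            (lab (x (finProdFinEquiv (w j, 0))) (x (finProdFinEquiv (w j, 1)) + 1))
            (lab (x (finProdFinEquiv (w j, 0)) + 1) (x (finProdFinEquiv (w j, 1)) + 1))))]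
      refine Finset.prod_congr rfl fun j _ => ?_
      have hu : (Finset.univ : Finset (Equiv.Perm (Fin 2))) = {1, Equiv.swap 0 1} := by decide
      have hne : (1 : Equiv.Perm (Fin 2)) ≠ Equiv.swap 0 1 := by decide
      rw [hu, Finset.sum_pair hne, if_pos rfl, if_neg hne.symm,
        Equiv.Perm.sign_swap (by decide : (0 : Fin 2) ≠ 1)]
      simp [squareDegree, sub_eq_add_neg]
    · intro κ _ κ' _ h
      funext j
      ext1 ε
      have := congrArg (fun τ => τ (finProdFinEquiv (j, ε))) h
      simpa [blockPerm_apply] using this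
    · simp
    · intro σ _ hσ
      by_contra hne
      have h1 := Finset.prod_ne_zero_iff.mp (right_ne_zero_of_mul hne)
      obtain ⟨κ, rfl⟩ := exists_blockPerm (fun j => h1 j (Finset.mem_univ _))
      exact hσ ⟨κ, by simp, rfl⟩
    · intro κ _
      rw [Finset.prod_mul_distrib, sign_blockPerm]
      push_cast
      rfl
  unfold kuhnSum
  simp only [hx]
  have e := Fintype.sum_equiv (((Equiv.arrowCongr finProdFinEquiv.symm (Equiv.refl _)).trans
    (Equiv.curry _ _ _)).trans (Equiv.arrowCongr (Equiv.refl (Fin M)) (finTwoArrowEquiv _)))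
    (fun x : Fin (M * 2) → ZMod N => ∏ t : Fin M,
      squareDegree lab (x (finProdFinEquiv (t, 0))) (x (finProdFinEquiv (t, 1))))
    (fun y : Fin M → ZMod N × ZMod N => ∏ t, squareDegree lab (y t).1 (y t).2) (fun x => rfl)
  rw [e, ← Fintype.piFinset_univ, ← Finset.prod_univ_sum (fun _ => Finset.univ)
    (fun (_ : Fin M) (p : ZMod N × ZMod N) => squareDegree lab p.1 p.2)]
  simp [gridDegree, Fintype.sum_prod_type]

/-- The signed sum of the face cochains of the two-dimensional factors of a torus grid. -/
def torusClass {M N : ℕ} (ε : Fin M → ℤ) (lab : ZMod N → ZMod N → Fin 4)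
    (x y z : Fin (M * 2) → ZMod N) : ℤ :=
  ∑ t, ε t * torusFace lab t x y z

theorem kuhnSum_torusClass_ne_zero {M N : ℕ} [NeZero N] (ε : Fin M → ℤ) (hε : ∀ t, ε t ≠ 0)
    (lab : ZMod N → ZMod N → Fin 4) (hlab : gridDegree lab ≠ 0) :
    kuhnSum (fun s => ∏ j : Fin M, torusClass ε lab (s (2 * j)) (s (2 * j + 1))
      (s (2 * j + 2))) ≠ 0 := by
  have hexp : kuhnSum (fun s => ∏ j : Fin M, torusClass ε lab (s (2 * j)) (s (2 * j + 1))
      (s (2 * j + 2))) = ∑ v : Fin M → Fin M, (∏ j, ε (v j)) *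
        kuhnSum (fun s => ∏ j : Fin M, torusFace lab (v j) (s (2 * j)) (s (2 * j + 1))
          (s (2 * j + 2))) := by
    unfold kuhnSum torusClass
    simp only [Finset.prod_univ_sum, Fintype.piFinset_univ, Finset.mul_sum]
    refine Eq.trans ?_ Finset.sum_comm
    refine Finset.sum_congr rfl fun x _ => Finset.sum_comm.trans ?_
    refine Finset.sum_congr rfl fun v _ => Finset.sum_congr rfl fun σ _ => ?_
    rw [Finset.prod_mul_distrib]
    ring
  have hterm : ∀ v : Fin M → Fin M, (∏ j, ε (v j)) *
        kuhnSum (fun s => ∏ j : Fin M, torusFace lab (v j) (s (2 * j)) (s (2 * j + 1))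
          (s (2 * j + 2))) =
      if Function.Injective v then (∏ j, ε j) * gridDegree lab ^ M else 0 := by
    intro v
    split_ifs with hv
    · obtain ⟨w, rfl⟩ : ∃ w : Equiv.Perm (Fin M), ⇑w = v :=
        ⟨Equiv.ofBijective v (Finite.injective_iff_bijective.mp hv), rfl⟩
      rw [kuhnSum_prod_torusFace, Equiv.prod_comp w]
    · rw [kuhnSum_prod_torusFace_of_not_injective lab v hv, mul_zero]
  rw [hexp, Finset.sum_congr rfl fun v _ => hterm v, Finset.sum_ite]
  rw [Finset.sum_const, Finset.sum_const_zero, add_zero, nsmul_eq_mul]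
  refine mul_ne_zero ?_ (mul_ne_zero (Finset.prod_ne_zero_iff.mpr fun t _ => hε t)
    (pow_ne_zero _ hlab))
  rw [Nat.cast_ne_zero, Finset.card_ne_zero]
  exact ⟨id, by simp [Function.injective_id]⟩

theorem kuhnSum_cupList_sub_cobd {d N : ℕ} [NeZero N] (hd : 0 < d)
    (c : (Fin d → ZMod N) → (Fin d → ZMod N) → (Fin d → ZMod N) → ℤ)
    (b : (Fin d → ZMod N) → (Fin d → ZMod N) → ℤ)
    (l₁ l₂ : List ((Fin d → ZMod N) → (Fin d → ZMod N) → (Fin d → ZMod N) → ℤ))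
    (h₁ : ∀ A ∈ l₁, ∀ x σ, ClosedAlong A (kuhnPath x σ))
    (h₂ : ∀ A ∈ l₂, ∀ x σ, ClosedAlong A (kuhnPath x σ))
    (hl : 2 * l₁.length + 2 * l₂.length + 2 = d) :
    kuhnSum (cupList (l₁ ++ (fun x y z => c x y z - (b y z - b x z + b x y)) :: l₂)) =
      kuhnSum (cupList (l₁ ++ c :: l₂)) := by
  obtain ⟨e, rfl⟩ : ∃ e, d = e + 1 := ⟨d - 1, by omega⟩
  have h := kuhnSum_cobd (e := e) (cupInsert b l₂ l₁)
    (fun s s' hs => cupInsert_congr b l₁ l₂ s s' fun k hk => hs k (by omega))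
  have he : 2 * l₁.length + 2 * l₂.length + 1 = e := by omega
  rw [← sub_eq_zero, ← neg_eq_zero, ← h]
  unfold kuhnSum
  rw [← Finset.sum_sub_distrib, ← Finset.sum_neg_distrib]
  refine Finset.sum_congr rfl fun x _ => ?_
  rw [← Finset.sum_sub_distrib, ← Finset.sum_neg_distrib]
  refine Finset.sum_congr rfl fun σ _ => ?_
  have key := cobd_cupInsert b _ _ _ (fun A hA => h₁ A hA x σ) (fun A hA => h₂ A hA x σ)
  rw [he] at key
  rw [key, cupList_append_cons_sub]
  ring

theorem kuhnSum_cupList_map {d N : ℕ} [NeZero N]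
    (c : (Fin d → ZMod N) → (Fin d → ZMod N) → (Fin d → ZMod N) → ℤ)
    (hc : ∀ x σ, ClosedAlong c (kuhnPath x σ))
    (l : List ((Fin d → ZMod N) → (Fin d → ZMod N) → ℤ))
    (l₁ : List ((Fin d → ZMod N) → (Fin d → ZMod N) → (Fin d → ZMod N) → ℤ))
    (h₁ : ∀ A ∈ l₁, ∀ x σ, ClosedAlong A (kuhnPath x σ))
    (hl : 2 * l₁.length + 2 * l.length = d) :
    kuhnSum (cupList (l₁ ++ l.map fun b x y z => c x y z - (b y z - b x z + b x y))) =
      kuhnSum (cupList (l₁ ++ List.replicate l.length c)) := by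
  induction l generalizing l₁ with
  | nil => simp
  | cons b l ih =>
    simp only [List.length_cons] at hl
    rw [List.map_cons, kuhnSum_cupList_sub_cobd (by omega) c b l₁ _ h₁ _
      (by simp only [List.length_map]; omega), List.append_cons, ih (l₁ ++ [c]),
      List.length_cons, List.replicate_succ, ← List.append_cons]
    · intro A hA
      rcases List.mem_append.mp hA with hA | hA
      · exact h₁ A hA
      · simp only [List.mem_singleton] at hA
        exact hA ▸ hc
    · simp only [List.length_append, List.length_singleton]; omega
    · intro A hA x σ k
      obtain ⟨b', -, rfl⟩ := List.mem_map.mp hA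
      have := hc x σ k
      linarith

/-- The class of a torus grid is not a coboundary on each member of a cover by `M` sets. -/
theorem not_exists_cobd_cover {M N : ℕ} [NeZero N] (ε : Fin M → ℤ) (hε : ∀ t, ε t ≠ 0)
    (lab : ZMod N → ZMod N → Fin 4) (hlab : gridDegree lab ≠ 0)
    (hc : ∀ x σ, ClosedAlong (torusClass ε lab) (kuhnPath x σ))
    (b : Fin M → (Fin (M * 2) → ZMod N) → (Fin (M * 2) → ZMod N) → ℤ)
    (hb : ∀ x σ, ∃ j, ∀ k, torusClass ε lab (kuhnPath x σ k) (kuhnPath x σ (k + 1))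
        (kuhnPath x σ (k + 2)) =
      b j (kuhnPath x σ (k + 1)) (kuhnPath x σ (k + 2)) - b j (kuhnPath x σ k)
        (kuhnPath x σ (k + 2)) + b j (kuhnPath x σ k) (kuhnPath x σ (k + 1))) : False := by
  have h := kuhnSum_cupList_map (torusClass ε lab) hc (List.ofFn b) [] (by simp)
    (by simp; ring)
  have hne := kuhnSum_torusClass_ne_zero ε hε lab hlab
  simp only [List.nil_append, List.length_ofFn, List.map_ofFn, ← List.ofFn_const] at h
  simp only [← cupList_ofFn] at hne
  apply hne
  refine h.symm.trans ?_
  refine Finset.sum_eq_zero fun x _ => Finset.sum_eq_zero fun σ _ => ?_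
  obtain ⟨j, hj⟩ := hb x σ
  rw [cupList_ofFn, Finset.prod_eq_zero (Finset.mem_univ j), mul_zero]
  simp only [Function.comp, hj (2 * j), sub_self]

/-- A labelling of the nonzero vectors of `ℝ³` such that the closures of the four label sets meet
only at the origin. -/
noncomputable def vectorLabel (v : Fin 3 → ℝ) : Fin 4 :=
  if 0 < v 0 then 0 else if 0 < v 1 then 1 else if 0 < v 2 then 3 else 2

/-- A map from the torus to `ℝ³ ∖ {0}` of degree one. -/
noncomputable def torusVector (p : Circle × Circle) : Fin 3 → ℝ :=
  ![(p.1 : ℂ).im, (p.2 : ℂ).im, 1 - (p.1 : ℂ).re - (p.2 : ℂ).re]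

/-- The labelling of the grid in the torus which is pulled back along `torusVector`. -/
noncomputable def gridLabel {N : ℕ} [NeZero N] (a b : ZMod N) : Fin 4 :=
  vectorLabel (torusVector (ZMod.toCircle a, ZMod.toCircle b))

theorem re_toCircle {P : ℕ} [NeZero (2 * P)] (a : ZMod (2 * P)) :
    (ZMod.toCircle a : ℂ).re = Real.cos (a.val / P * Real.pi) := by
  have hP : (P : ℝ) ≠ 0 := by
    have := NeZero.ne (2 * P); simp at this; exact_mod_cast this
  conv_lhs => rw [← ZMod.natCast_zmod_val a, ← Int.cast_natCast, ZMod.toCircle_intCast]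
  rw [← Complex.exp_ofReal_mul_I_re]
  congr 2
  push_cast
  have hP' : (P : ℂ) ≠ 0 := by exact_mod_cast hP
  field_simp

theorem im_toCircle {P : ℕ} [NeZero (2 * P)] (a : ZMod (2 * P)) :
    (ZMod.toCircle a : ℂ).im = Real.sin (a.val / P * Real.pi) := by
  have hP : (P : ℝ) ≠ 0 := by
    have := NeZero.ne (2 * P); simp at this; exact_mod_cast this
  conv_lhs => rw [← ZMod.natCast_zmod_val a, ← Int.cast_natCast, ZMod.toCircle_intCast]
  rw [← Complex.exp_ofReal_mul_I_im]
  congr 2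
  push_cast
  have hP' : (P : ℂ) ≠ 0 := by exact_mod_cast hP
  field_simp

theorem im_toCircle_pos_iff {P : ℕ} [NeZero (2 * P)] (a : ZMod (2 * P)) :
    0 < (ZMod.toCircle a : ℂ).im ↔ 0 < a.val ∧ a.val < P := by
  have hP0 : 0 < P := by
    have := NeZero.ne (2 * P); simp at this; omega
  have hP : (0 : ℝ) < P := by exact_mod_cast hP0
  have hv := a.val_lt
  rw [im_toCircle]
  constructor
  · intro h
    by_contra hcon
    rcases Nat.eq_zero_or_pos a.val with h0 | h0
    · simp [h0] at h
    · have h1 : P ≤ a.val := by omega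
      have h2 : (P : ℝ) ≤ a.val := by exact_mod_cast h1
      have h3 : (a.val : ℝ) < 2 * P := by exact_mod_cast hv
      have : 0 ≤ Real.sin ((a.val / P - 1) * Real.pi) := by
        apply Real.sin_nonneg_of_nonneg_of_le_pi
        · have : 1 ≤ (a.val : ℝ) / P := by rwa [le_div_iff₀ hP, one_mul]
          have := Real.pi_pos
          apply mul_nonneg <;> linarith
        · have : (a.val : ℝ) / P ≤ 2 := by rw [div_le_iff₀ hP]; linarith
          have := Real.pi_pos
          nlinarith
      rw [sub_mul, one_mul, Real.sin_sub_pi] at this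
      linarith
  · rintro ⟨h0, h1⟩
    have h2 : (0 : ℝ) < a.val := by exact_mod_cast h0
    have h3 : (a.val : ℝ) < P := by exact_mod_cast h1
    apply Real.sin_pos_of_pos_of_lt_pi
    · have := Real.pi_pos
      positivity
    · have : (a.val : ℝ) / P < 1 := by rwa [div_lt_one hP]
      have := Real.pi_pos
      nlinarith

theorem val_add_one_two_mul {P : ℕ} (hP : 2 ≤ P) (a : ZMod (2 * P)) :
    (a + 1).val = if a.val + 1 = 2 * P then 0 else a.val + 1 := by
  have : NeZero (2 * P) := ⟨by omega⟩
  have hv := a.val_lt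
  rw [ZMod.val_add, ZMod.val_one'' (by omega)]
  split_ifs with h
  · rw [h, Nat.mod_self]
  · exact Nat.mod_eq_of_lt (by omega)

theorem re_toCircle_add_one_of_im {P : ℕ} [NeZero (2 * P)] (hP : 2 ≤ P) (a : ZMod (2 * P))
    (h : 0 < (ZMod.toCircle a : ℂ).im) (h' : ¬ 0 < (ZMod.toCircle (a + 1) : ℂ).im) :
    (ZMod.toCircle (a + 1) : ℂ).re = -1 := by
  rw [im_toCircle_pos_iff] at h h'
  rw [re_toCircle]
  have hv := val_add_one_two_mul hP a
  have : (a + 1).val = P := by split_ifs at hv <;> omega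
  have hP' : (P : ℝ) ≠ 0 := by norm_cast; omega
  rw [this, div_self hP', one_mul, Real.cos_pi]

theorem eq_zero_of_im_toCircle_add_one {P : ℕ} [NeZero (2 * P)] (hP : 2 ≤ P) (a : ZMod (2 * P))
    (h : ¬ 0 < (ZMod.toCircle a : ℂ).im) (h' : 0 < (ZMod.toCircle (a + 1) : ℂ).im) : a = 0 := by
  rw [im_toCircle_pos_iff] at h h'
  have hv := val_add_one_two_mul hP a
  rw [← ZMod.val_eq_zero]
  split_ifs at hv <;> omega

theorem gridDegree_gridLabel {P : ℕ} [NeZero (2 * P)] (hP : 2 ≤ P) :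
    gridDegree (N := 2 * P) gridLabel = 1 := by
  have hre : ∀ z : Circle, (z : ℂ).re ≤ 1 := fun z =>
    (Complex.re_le_norm _).trans (Circle.norm_coe z).le
  have h0im : ¬ 0 < (ZMod.toCircle (0 : ZMod (2 * P)) : ℂ).im := by simp
  have h0re : (ZMod.toCircle (0 : ZMod (2 * P)) : ℂ).re = 1 := by simp
  have h1im : 0 < (ZMod.toCircle (1 : ZMod (2 * P)) : ℂ).im := by
    rw [im_toCircle_pos_iff, ZMod.val_one'' (by omega)]; omega
  have hlab : ∀ a b : ZMod (2 * P), gridLabel a b =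
      if 0 < (ZMod.toCircle a : ℂ).im then 0 else if 0 < (ZMod.toCircle b : ℂ).im then 1 else
      if 0 < 1 - (ZMod.toCircle a : ℂ).re - (ZMod.toCircle b : ℂ).re then 3 else 2 := by
    intro a b; simp [gridLabel, vectorLabel, torusVector]
  have hsq : ∀ a b : ZMod (2 * P), squareDegree gridLabel a b =
      if a = 0 ∧ b = 0 then 1 else 0 := by
    intro a b
    have F1 := re_toCircle_add_one_of_im hP a
    have F1' := re_toCircle_add_one_of_im hP b
    have F2 := eq_zero_of_im_toCircle_add_one hP a
    have F2' := eq_zero_of_im_toCircle_add_one hP b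
    have A : faceSign (gridLabel a b) (gridLabel (a + 1) b) (gridLabel (a + 1) (b + 1)) = 0 := by
      have r1 := hre (ZMod.toCircle b)
      have r2 := hre (ZMod.toCircle (b + 1))
      simp only [hlab]
      by_cases s1 : 0 < (ZMod.toCircle (a + 1) : ℂ).im
      · simp only [s1, if_true, faceSign_self_right]
      · by_cases s0 : 0 < (ZMod.toCircle a : ℂ).im
        · have hr := F1 s0 s1
          have c1 : 0 < 1 - (ZMod.toCircle (a + 1) : ℂ).re - (ZMod.toCircle b : ℂ).re := by
            rw [hr]; linarith
          have c2 : 0 < 1 - (ZMod.toCircle (a + 1) : ℂ).re - (ZMod.toCircle (b + 1) : ℂ).re := by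
            rw [hr]; linarith
          simp only [s0, s1, c1, c2, if_true, if_false]
          split_ifs <;> decide
        · simp only [s0, s1, if_false]
          split_ifs <;> decide
    have B : faceSign (gridLabel a b) (gridLabel a (b + 1)) (gridLabel (a + 1) (b + 1)) =
        if a = 0 ∧ b = 0 then -1 else 0 := by
      by_cases s0 : 0 < (ZMod.toCircle a : ℂ).im
      · have : a ≠ 0 := by rintro rfl; exact h0im s0
        simp only [hlab, s0, if_true, faceSign_self_left, this, false_and, if_false]
      by_cases s1 : 0 < (ZMod.toCircle (a + 1) : ℂ).im
      · obtain rfl := F2 s0 s1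
        by_cases t0 : 0 < (ZMod.toCircle b : ℂ).im
        · have : b ≠ 0 := by rintro rfl; exact h0im t0
          simp only [this, and_false, if_false]
          by_cases t1 : 0 < (ZMod.toCircle (b + 1) : ℂ).im
          · simp only [hlab, s0, t0, t1, if_true, if_false, faceSign_self_left]
          · have hr := F1' t0 t1
            simp only [hlab, s0, s1, t0, t1, hr, h0re, if_true, if_false]
            norm_num
            decide
        · by_cases t1 : 0 < (ZMod.toCircle (b + 1) : ℂ).im
          · obtain rfl := F2' t0 t1
            simp only [hlab, s0, s1, h0re, if_true, if_false]
            norm_num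
            decide
          · have : b ≠ 0 := by rintro rfl; exact t1 (by simpa using h1im)
            simp only [hlab, s0, s1, t0, t1, this, if_true, if_false, and_false]
            split_ifs <;> decide
      · have : a ≠ 0 := by rintro rfl; exact s1 (by simpa using h1im)
        simp only [hlab, s0, s1, this, if_false, false_and]
        split_ifs <;> decide
    rw [squareDegree, A, B]
    split_ifs <;> simp
  simp only [gridDegree, hsq, ite_and]
  simp

open Filter Topology in
/-- Near every nonzero vector some label is missing. -/
theorem exists_eventually_vectorLabel_ne {v : Fin 3 → ℝ} (hv : v ≠ 0) :
    ∃ l : Fin 4, ∀ᶠ w in 𝓝 v, vectorLabel w ≠ l := by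
  have key : ∀ i, v i ≠ 0 → (∀ᶠ w : Fin 3 → ℝ in 𝓝 v, 0 < w i) ∨
      ∀ᶠ w : Fin 3 → ℝ in 𝓝 v, w i < 0 := by
    intro i hi
    have hc : ContinuousAt (fun w : Fin 3 → ℝ => w i) v := (continuous_apply i).continuousAt
    rcases lt_or_gt_of_ne hi with h | h
    · exact Or.inr (hc.eventually (Iio_mem_nhds h))
    · exact Or.inl (hc.eventually (Ioi_mem_nhds h))
  by_cases h0 : v 0 = 0
  · by_cases h1 : v 1 = 0
    · have h2 : v 2 ≠ 0 := by
        intro h2; apply hv; ext i; fin_cases i <;> assumption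
      rcases key 2 h2 with h | h
      · refine ⟨2, h.mono fun w hw => ?_⟩
        unfold vectorLabel; split_ifs <;> decide
      · refine ⟨3, h.mono fun w hw => ?_⟩
        unfold vectorLabel; rw [if_neg hw.not_gt]; split_ifs <;> decide
    · rcases key 1 h1 with h | h
      · refine ⟨2, h.mono fun w hw => ?_⟩
        unfold vectorLabel; rw [if_pos hw]; split_ifs <;> decide
      · refine ⟨1, h.mono fun w hw => ?_⟩
        unfold vectorLabel; rw [if_neg hw.not_gt]; split_ifs <;> decide
  · rcases key 0 h0 with h | h
    · refine ⟨1, h.mono fun w hw => ?_⟩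
      unfold vectorLabel; rw [if_pos hw]; decide
    · refine ⟨0, h.mono fun w hw => ?_⟩
      unfold vectorLabel; rw [if_neg hw.not_gt]; split_ifs <;> decide

theorem vectorLabel_smul {c : ℝ} (hc : 0 < c) (v : Fin 3 → ℝ) :
    vectorLabel (c • v) = vectorLabel v := by
  simp [vectorLabel, hc]

theorem continuous_torusVector : Continuous torusVector := by
  unfold torusVector
  refine continuous_pi fun i => ?_
  fin_cases i
  · exact Complex.continuous_im.comp (continuous_subtype_val.comp continuous_fst)
  · exact Complex.continuous_im.comp (continuous_subtype_val.comp continuous_snd)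
  · exact (continuous_const.sub
      (Complex.continuous_re.comp (continuous_subtype_val.comp continuous_fst))).sub
      (Complex.continuous_re.comp (continuous_subtype_val.comp continuous_snd))

theorem torusVector_ne_zero (p : Circle × Circle) : torusVector p ≠ 0 := by
  intro h
  have h0 : (p.1 : ℂ).im = 0 := congrFun h 0
  have h1 : (p.2 : ℂ).im = 0 := congrFun h 1
  have h2 : 1 - (p.1 : ℂ).re - (p.2 : ℂ).re = 0 := congrFun h 2
  have e : ∀ z : Circle, (z : ℂ).im = 0 → (z : ℂ).re = 1 ∨ (z : ℂ).re = -1 := by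
    intro z hz
    have := z.normSq_coe
    rw [Complex.normSq_apply, hz, mul_zero, add_zero] at this
    exact mul_self_eq_one_iff.mp this
  rcases e _ h0 with h | h <;> rcases e _ h1 with h' | h' <;> rw [h, h'] at h2 <;> norm_num at h2

open Filter Topology in
/-- Consecutive points of a sufficiently fine grid of the circle are close. -/
theorem exists_dist_toCircle_lt {δ : ℝ} (hδ : 0 < δ) : ∃ (P : ℕ) (_ : NeZero (2 * P)), 2 ≤ P ∧
    ∀ a : ZMod (2 * P), dist (ZMod.toCircle (a + 1)) (ZMod.toCircle a) < δ := by
  have h : Tendsto (fun P : ℕ => Circle.exp (Real.pi * (P : ℝ)⁻¹)) atTop (𝓝 (Circle.exp 0)) := by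
    refine (Circle.exp.continuous.tendsto 0).comp ?_
    simpa using (tendsto_inv_atTop_nhds_zero_nat (𝕜 := ℝ)).const_mul Real.pi
  obtain ⟨P, hP, hd⟩ := ((eventually_ge_atTop 2).and
    (h.eventually (Metric.ball_mem_nhds _ hδ))).exists
  have hN : NeZero (2 * P) := ⟨by omega⟩
  refine ⟨P, hN, hP, fun a => ?_⟩
  have h1 : ZMod.toCircle (1 : ZMod (2 * P)) = Circle.exp (Real.pi * (P : ℝ)⁻¹) := by
    rw [ZMod.toCircle_eq_circleExp, ZMod.val_one'' (by omega)]
    congr 1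
    have : (P : ℝ) ≠ 0 := by positivity
    push_cast
    field_simp
  have hdist : ∀ z w : Circle, dist z w = ‖(z : ℂ) - w‖ := fun z w =>
    (Subtype.dist_eq z w).trans (dist_eq_norm _ _)
  rw [AddChar.map_add_eq_mul, hdist, Circle.coe_mul, ← mul_sub_one, norm_mul, Circle.norm_coe,
    one_mul, h1]
  simpa [hdist] using hd

theorem dist_toCircle_comp_kuhnPath_lt {d N : ℕ} [NeZero N] {δ : ℝ} (hδ : 0 < δ)
    (h : ∀ a : ZMod N, dist (ZMod.toCircle (a + 1)) (ZMod.toCircle a) < δ)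
    (x : Fin d → ZMod N) (σ : Equiv.Perm (Fin d)) (k : ℕ) :
    dist (fun e => ZMod.toCircle (kuhnPath x σ k e)) (fun e => ZMod.toCircle (x e)) < δ := by
  rw [dist_pi_lt_iff hδ]
  intro e
  unfold kuhnPath
  split_ifs
  · exact h _
  · simpa using hδ

/-- A family of homotopies of nonvanishing vector fields, defined on the members of a cover of the
torus, between the two sides `0` and `1` of each factor. -/
theorem not_exists_vector_homotopies {m : ℕ}
    (K V : Fin (m * 2) → Set (Fin (m * 2 * 2) → Circle))
    (hK : ∀ j, IsClosed (K j)) (hV : ∀ j, IsOpen (V j)) (hKV : ∀ j, K j ⊆ V j)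
    (hcov : ∀ u, ∃ j, u ∈ K j)
    (v : Fin (m * 2) → Fin m → (Fin (m * 2 * 2) → Circle) × unitInterval → Fin 3 → ℝ)
    (hv : ∀ j i, ContinuousOn (v j i) (V j ×ˢ Set.univ))
    (hv0 : ∀ j i, ∀ u ∈ V j, ∀ t, v j i (u, t) ≠ 0)
    (hside : ∀ j i, ∀ u ∈ V j, ∀ a : Fin 2, vectorLabel (v j i (u, if a = 0 then 0 else 1)) =
      vectorLabel (torusVector (u (finProdFinEquiv (finProdFinEquiv (i, a), 0)),
        u (finProdFinEquiv (finProdFinEquiv (i, a), 1))))) : False := by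
  have hleb : ∀ j i, ∃ δ > 0, ∀ z ∈ K j ×ˢ (Set.univ : Set unitInterval), ∃ l : Fin 4,
      ∀ w ∈ Metric.ball z δ, w.1 ∈ V j ∧ vectorLabel (v j i w) ≠ l := by
    intro j i
    obtain ⟨δ, hδ, h⟩ := lebesgue_number_lemma_of_metric
      (((hK j).isCompact).prod (isCompact_univ : IsCompact (Set.univ : Set unitInterval)))
      (c := fun l : Fin 4 => (V j ×ˢ (Set.univ : Set unitInterval)) ∩
        v j i ⁻¹' interior {w | vectorLabel w ≠ l})
      (fun l => (hv j i).isOpen_inter_preimage ((hV j).prod isOpen_univ) isOpen_interior) (by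
        rintro ⟨u, t⟩ ⟨hu, -⟩
        obtain ⟨l, hl⟩ := exists_eventually_vectorLabel_ne (hv0 j i u (hKV j hu) t)
        exact Set.mem_iUnion.mpr ⟨l, ⟨hKV j hu, trivial⟩, mem_interior_iff_mem_nhds.mpr hl⟩)
    refine ⟨δ, hδ, fun z hz => ?_⟩
    obtain ⟨l, hl⟩ := h z hz
    exact ⟨l, fun w hw => ⟨(hl hw).1.1, interior_subset (hl hw).2⟩⟩
  choose δ hδ hball using hleb
  obtain ⟨η, hηδ, hη⟩ : ∃ η, (∀ j i, η ≤ δ j i) ∧ 0 < η := by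
    have h : ∀ᶠ η in nhdsWithin (0 : ℝ) (Set.Ioi 0), ∀ j i, η ≤ δ j i :=
      Filter.eventually_all.mpr fun j => Filter.eventually_all.mpr fun i =>
        mem_nhdsWithin_of_mem_nhds (Iic_mem_nhds (hδ j i))
    exact (h.and self_mem_nhdsWithin).exists
  obtain ⟨P, hN, hP, hgrid⟩ := exists_dist_toCircle_lt hη
  obtain ⟨n, hn⟩ := exists_nat_one_div_lt hη
  set T : ℕ → unitInterval := fun k => Set.projIcc (0 : ℝ) 1 zero_le_one (k / (n + 1 : ℕ)) with hT
  have hT0 : T 0 = 0 := by simp [hT, Set.projIcc_of_le_left]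
  have hT1 : T (n + 1) = 1 := by
    simp only [hT]
    rw [div_self (by positivity)]
    exact Set.projIcc_right (h := (zero_le_one : (0 : ℝ) ≤ 1))
  have hTd : ∀ k, dist (T (k + 1)) (T k) < η := by
    intro k
    rw [Subtype.dist_eq, Real.dist_eq]
    refine (Set.abs_projIcc_sub_projIcc _).trans_lt ?_
    rw [← sub_div]
    push_cast
    rw [add_sub_cancel_left, abs_of_pos (by positivity)]
    exact hn
  set c : (Fin (m * 2 * 2) → ZMod (2 * P)) → Fin (m * 2 * 2) → Circle :=
    fun x e => ZMod.toCircle (x e) with hc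
  set L : Fin (m * 2) → Fin m → (Fin (m * 2 * 2) → ZMod (2 * P)) → ℕ → Fin 4 :=
    fun j i x k => vectorLabel (v j i (c x, T k)) with hL
  have hstep : ∀ x σ, ∃ j, (∀ k, c (kuhnPath x σ k) ∈ V j) ∧ ∀ i k, ∃ l, ∀ r,
      L j i (kuhnPath x σ r) k ≠ l ∧ L j i (kuhnPath x σ r) (k + 1) ≠ l := by
    intro x σ
    obtain ⟨j, hj⟩ := hcov (c x)
    have hd : ∀ i k t, dist t (T k) < η → ∀ r,
        (c (kuhnPath x σ r), t) ∈ Metric.ball (c x, T k) (δ j i) := by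
      intro i k t ht r
      rw [Metric.mem_ball, Prod.dist_eq]
      exact (max_lt (dist_toCircle_comp_kuhnPath_lt hη hgrid x σ r) ht).trans_le (hηδ j i)
    have hi : ∀ i k, ∃ l, ∀ w ∈ Metric.ball (c x, T k) (δ j i),
        w.1 ∈ V j ∧ vectorLabel (v j i w) ≠ l := fun i k => hball j i (c x, T k) ⟨hj, trivial⟩
    refine ⟨j, fun k => ?_, fun i k => ?_⟩
    · have hm : 0 < m := by have := j.2; omega
      obtain ⟨l, hl⟩ := hi ⟨0, hm⟩ 0
      exact (hl _ (hd _ 0 (T 0) (by simpa using hη) k)).1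
    · obtain ⟨l, hl⟩ := hi i k
      exact ⟨l, fun r => ⟨(hl _ (hd i k _ (by simpa using hη) r)).2, (hl _ (hd i k _ (hTd k) r)).2⟩⟩
  have hgl : ∀ j i x, c x ∈ V j → ∀ a : Fin 2, L j i x (if a = 0 then 0 else n + 1) =
      gridLabel (x (finProdFinEquiv (finProdFinEquiv (i, a), 0)))
        (x (finProdFinEquiv (finProdFinEquiv (i, a), 1))) := by
    intro j i x hx a
    rw [gridLabel, ← hside j i (c x) hx a]
    simp only [hL]
    split_ifs
    · rw [hT0]
    · rw [hT1]
  have hface : ∀ j i x y z, c x ∈ V j → c y ∈ V j → c z ∈ V j → ∀ a : Fin 2,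
      torusFace gridLabel (finProdFinEquiv (i, a)) x y z =
        faceSign (L j i x (if a = 0 then 0 else n + 1)) (L j i y (if a = 0 then 0 else n + 1))
          (L j i z (if a = 0 then 0 else n + 1)) := by
    intro j i x y z hx hy hz a
    rw [hgl j i x hx, hgl j i y hy, hgl j i z hz, torusFace]
  refine not_exists_cobd_cover (N := 2 * P)
    (fun t : Fin (m * 2) => if (finProdFinEquiv.symm t).2 = 0 then -1 else 1)
    (fun t => by split_ifs <;> decide) gridLabel
    (by rw [gridDegree_gridLabel hP]; exact one_ne_zero) (fun x σ k => ?_)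
    (fun j x y => ∑ i, ∑ k ∈ Finset.range (n + 1),
      facePrism (L j i x k) (L j i y k) (L j i x (k + 1)) (L j i y (k + 1))) (fun x σ => ?_)
  · obtain ⟨j, hjV, hj⟩ := hstep x σ
    simp only [torusClass, ← Finset.sum_sub_distrib, ← Finset.sum_add_distrib, ← mul_sub,
      ← mul_add]
    refine Finset.sum_eq_zero fun t _ => mul_eq_zero_of_right _ ?_
    obtain ⟨⟨i, a⟩, rfl⟩ := finProdFinEquiv.surjective t
    simp only [hface j i _ _ _ (hjV _) (hjV _) (hjV _)]
    obtain ⟨l, hl⟩ := hj i (if a = 0 then 0 else n + 1)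
    exact faceSign_closed l _ _ _ _ (hl _).1 (hl _).1 (hl _).1 (hl _).1
  · obtain ⟨j, hjV, hj⟩ := hstep x σ
    refine ⟨j, fun k => ?_⟩
    rw [torusClass, ← finProdFinEquiv.sum_comp, Fintype.sum_prod_type]
    simp only [← Finset.sum_sub_distrib, ← Finset.sum_add_distrib]
    refine Finset.sum_congr rfl fun i _ => ?_
    rw [Fin.sum_univ_two]
    simp only [hface j i _ _ _ (hjV _) (hjV _) (hjV _), Equiv.symm_apply_apply]
    have := Finset.sum_range_sub (fun q => faceSign (L j i (kuhnPath x σ k) q)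
      (L j i (kuhnPath x σ (k + 1)) q) (L j i (kuhnPath x σ (k + 2)) q)) (n + 1)
    simp only [if_true, one_ne_zero, if_false]
    rw [neg_one_mul, one_mul, neg_add_eq_sub, ← this]
    refine Finset.sum_congr rfl fun q _ => ?_
    obtain ⟨l, hl⟩ := hj i q
    exact facePrism_cobd l _ _ _ _ _ _ (hl _).1 (hl _).1 (hl _).1 (hl _).2 (hl _).2 (hl _).2

/-- The configuration of the origin and of points on spheres with radii `1, …, m` in given
directions. -/
noncomputable def radialConf {m : ℕ} (w : Fin m → {v : Fin 3 → ℝ // v ≠ 0}) :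
    ConfSpace (m + 1) 3 :=
  ⟨Fin.cons 0 fun i => (((i : ℝ) + 1) / ‖(w i).1‖) • (w i).1, by
    have h : ∀ k, ‖(Fin.cons 0 fun i => (((i : ℝ) + 1) / ‖(w i).1‖) • (w i).1 :
        Fin (m + 1) → Fin 3 → ℝ) k‖ = (k : ℝ) := by
      intro k
      induction k using Fin.cases with
      | zero => simp
      | succ i =>
        have hi : ‖(w i).1‖ ≠ 0 := norm_ne_zero_iff.mpr (w i).2
        rw [Fin.cons_succ, norm_smul, norm_div, norm_norm, div_mul_cancel₀ _ hi,
          Real.norm_of_nonneg (by positivity)]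
        simp
    intro k l hkl
    have := congrArg norm hkl
    rw [h, h] at this
    exact Fin.ext (by exact_mod_cast this)⟩

theorem continuous_radialConf {m : ℕ} : Continuous (radialConf (m := m)) := by
  refine Continuous.subtype_mk (continuous_pi fun k => ?_) _
  induction k using Fin.cases with
  | zero => simpa using continuous_const
  | succ i =>
    simp only [Fin.cons_succ]
    have h : Continuous fun w : Fin m → {v : Fin 3 → ℝ // v ≠ 0} => (w i).1 :=
      continuous_subtype_val.comp (continuous_apply i)
    exact (continuous_const.div h.norm fun w => norm_ne_zero_iff.mpr (w i).2).smul h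

/-- The directions given by one side of the torus. -/
noncomputable def torusDirections {m : ℕ} (a : Fin 2) (u : Fin (m * 2 * 2) → Circle) (i : Fin m) :
    {v : Fin 3 → ℝ // v ≠ 0} :=
  ⟨torusVector (u (finProdFinEquiv (finProdFinEquiv (i, a), 0)),
    u (finProdFinEquiv (finProdFinEquiv (i, a), 1))), torusVector_ne_zero _⟩

theorem continuous_torusDirections {m : ℕ} (a : Fin 2) :
    Continuous (torusDirections (m := m) a) :=
  continuous_pi fun i => Continuous.subtype_mk (continuous_torusVector.comp
    (f := fun u : Fin (m * 2 * 2) → Circle => (u (finProdFinEquiv (finProdFinEquiv (i, a), 0)),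
      u (finProdFinEquiv (finProdFinEquiv (i, a), 1))))
    ((continuous_apply _).prodMk (continuous_apply _))) _

theorem vectorLabel_radialConf_sub {m : ℕ} (w : Fin m → {v : Fin 3 → ℝ // v ≠ 0}) (i : Fin m) :
    vectorLabel ((radialConf w).1 i.succ - (radialConf w).1 0) = vectorLabel (w i).1 := by
  have hi : 0 < ‖(w i).1‖ := norm_pos_iff.mpr (w i).2
  simp only [radialConf, Fin.cons_succ, Fin.cons_zero, sub_zero]
  exact vectorLabel_smul (by positivity) _

theorem not_hasTCCover_confSpace (m : ℕ) : ¬ HasTCCover (ConfSpace (m + 1) 3) (m * 2) := by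
  rintro ⟨U, hUo, hUc, hU⟩
  choose s hs using hU
  let f : (Fin (m * 2 * 2) → Circle) → ConfSpace (m + 1) 3 × ConfSpace (m + 1) 3 :=
    fun u => (radialConf (torusDirections 0 u), radialConf (torusDirections 1 u))
  have hf : Continuous f := (continuous_radialConf.comp (continuous_torusDirections 0)).prodMk
    (continuous_radialConf.comp (continuous_torusDirections 1))
  have hVo : ∀ j, IsOpen (f ⁻¹' U j) := fun j => (hUo j).preimage hf
  obtain ⟨K, hKc, hK, hKV⟩ := exists_iUnion_eq_closed_subset hVo (fun _ => Set.toFinite _)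
    (by rw [← Set.preimage_iUnion, hUc, Set.preimage_univ])
  classical
  let v : Fin (m * 2) → Fin m → (Fin (m * 2 * 2) → Circle) × unitInterval → Fin 3 → ℝ :=
    fun j i z => if h : f z.1 ∈ U j then
      (s j ⟨f z.1, h⟩ z.2).1 i.succ - (s j ⟨f z.1, h⟩ z.2).1 0 else 0
  have hvdef : ∀ j i u t (h : f u ∈ U j),
      v j i (u, t) = (s j ⟨f u, h⟩ t).1 i.succ - (s j ⟨f u, h⟩ t).1 0 :=
    fun j i u t h => dif_pos h
  refine not_exists_vector_homotopies K (fun j => f ⁻¹' U j) hK hVo hKV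
    (fun u => Set.mem_iUnion.mp (hKc ▸ Set.mem_univ u)) v ?_ ?_ ?_
  · intro j i
    rw [continuousOn_iff_continuous_domRestrict]
    have hγ : Continuous fun z : ((f ⁻¹' U j) ×ˢ (Set.univ : Set unitInterval) :
        Set ((Fin (m * 2 * 2) → Circle) × unitInterval)) =>
        (s j ⟨f z.1.1, z.2.1⟩ z.1.2).1 := by
      refine continuous_subtype_val.comp ?_
      have h1 : Continuous fun z : ((f ⁻¹' U j) ×ˢ (Set.univ : Set unitInterval) :
        Set ((Fin (m * 2 * 2) → Circle) × unitInterval)) => s j ⟨f z.1.1, z.2.1⟩ :=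
        (s j).continuous.comp (Continuous.subtype_mk
          (hf.comp (continuous_fst.comp continuous_subtype_val)) _)
      exact h1.eval (continuous_snd.comp continuous_subtype_val)
    refine (((continuous_apply i.succ).comp hγ).sub ((continuous_apply 0).comp hγ)).congr ?_
    rintro ⟨⟨u, t⟩, hu, -⟩
    exact (hvdef j i u t hu).symm
  · intro j i u hu t
    rw [hvdef j i u t hu, sub_ne_zero]
    exact fun h => Fin.succ_ne_zero i ((s j ⟨f u, hu⟩ t).2 h)
  · intro j i u hu a
    rw [hvdef j i u _ hu]
    fin_cases a
    · simp only [Fin.zero_eta, if_true, (hs j ⟨f u, hu⟩).1]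
      exact vectorLabel_radialConf_sub _ i
    · simp only [Fin.mk_one, one_ne_zero, if_false, (hs j ⟨f u, hu⟩).2]
      exact vectorLabel_radialConf_sub _ i

section StrataCover

variable {X : Type*}

theorem HasMotionPlanningSection.mono [TopologicalSpace X] {U V : Set (X × X)}
    (h : HasMotionPlanningSection X V) (hUV : U ⊆ V) : HasMotionPlanningSection X U := by
  obtain ⟨s, hs⟩ := h
  exact ⟨s.comp (ContinuousMap.inclusion hUV), fun p => hs _⟩

theorem HasMotionPlanningSection.iUnion [TopologicalSpace X] {ι : Type*} {U : ι → Set (X × X)}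
    (hU : ∀ i, IsOpen (U i)) (hd : Pairwise fun i j => Disjoint (U i) (U j))
    (h : ∀ i, HasMotionPlanningSection X (U i)) : HasMotionPlanningSection X (⋃ i, U i) := by
  choose s hs using h
  let S : ι → Set (⋃ i, U i : Set (X × X)) := fun i => {z | z.1 ∈ U i}
  have hS : ∀ z, ∃ i, S i ∈ nhds z := fun z =>
    (Set.mem_iUnion.mp z.2).imp fun i hi =>
      ((hU i).preimage continuous_subtype_val).mem_nhds hi
  let φ : ∀ i, C(S i, PathSpace X) := fun i => (s i).comp
    ⟨fun z => ⟨z.1.1, z.2⟩, (continuous_subtype_val.comp continuous_subtype_val).subtype_mk _⟩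
  have hφ : ∀ i j z (hi : z ∈ S i) (hj : z ∈ S j), φ i ⟨z, hi⟩ = φ j ⟨z, hj⟩ := by
    intro i j z hi hj
    obtain rfl : i = j := by
      by_contra hij
      exact Set.disjoint_left.mp (hd hij) hi hj
    rfl
  refine ⟨ContinuousMap.liftCover S φ hφ hS, fun z => ?_⟩
  obtain ⟨i, hi⟩ := Set.mem_iUnion.mp z.2
  have : ContinuousMap.liftCover S φ hφ hS z = φ i ⟨z, hi⟩ :=
    ContinuousMap.liftCover_coe (⟨z, hi⟩ : S i)
  rw [this]
  exact hs i ⟨z.1, hi⟩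

theorem hasMotionPlanningSection_of_homotopic [TopologicalSpace X] {U : Set (X × X)}
    (h : ContinuousMap.Homotopic (⟨fun z => z.1.1, by fun_prop⟩ : C(U, X))
      ⟨fun z => z.1.2, by fun_prop⟩) : HasMotionPlanningSection X U := by
  obtain ⟨H⟩ := h
  refine ⟨(H.toContinuousMap.comp ⟨Prod.swap, continuous_swap⟩).curry, fun z => ⟨?_, ?_⟩⟩
  · exact H.apply_zero z
  · exact H.apply_one z

theorem hasMotionPlanningSection_prod [TopologicalSpace X] {U V : Set X} {x₀ : X}
    (hU : ContinuousMap.Homotopic (⟨Subtype.val, continuous_subtype_val⟩ : C(U, X))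
      (ContinuousMap.const _ x₀))
    (hV : ContinuousMap.Homotopic (⟨Subtype.val, continuous_subtype_val⟩ : C(V, X))
      (ContinuousMap.const _ x₀)) : HasMotionPlanningSection X (U ×ˢ V) := by
  apply hasMotionPlanningSection_of_homotopic
  have h1 := hU.comp (ContinuousMap.Homotopic.refl
    (⟨fun z => ⟨z.1.1, z.2.1⟩, by fun_prop⟩ : C((U ×ˢ V : Set (X × X)), U)))
  have h2 := hV.comp (ContinuousMap.Homotopic.refl
    (⟨fun z => ⟨z.1.2, z.2.2⟩, by fun_prop⟩ : C((U ×ˢ V : Set (X × X)), V)))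
  exact h1.trans h2.symm

/-- A stratification of `X × X` with motion planners near the strata gives a motion planning cover
indexed by the ranks of the strata. -/
theorem hasTCCover_of_strata [PseudoMetricSpace X] {Q : Type*} [Finite Q] (r : Q → ℕ) (k : ℕ)
    (hr : ∀ q, r q ≤ k) (A : X × X → Q) (U : Q → Set (X × X)) (hU : ∀ q, IsOpen (U q))
    (hA : ∀ z, z ∈ U (A z))
    (hcl : ∀ z q, z ∈ closure {w | A w = q} → A z ≠ q → r (A z) < r q)
    (hs : ∀ q, HasMotionPlanningSection X (U q)) : HasTCCover X (k + 1) := by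
  let W : Q → Set (X × X) := fun q => U q ∩ ⋂ q', {z | q' ≠ q → r q' = r q →
    Metric.infEDist z {w | A w = q} < Metric.infEDist z {w | A w = q'}}
  have hW : ∀ q, IsOpen (W q) := by
    refine fun q => (hU q).inter (isOpen_iInter_of_finite fun q' => ?_)
    by_cases h : q' ≠ q ∧ r q' = r q
    · simpa [h.1, h.2] using isOpen_lt (Metric.continuous_infEDist (s := {w | A w = q}))
        (Metric.continuous_infEDist (s := {w | A w = q'}))
    · convert isOpen_univ
      refine Set.eq_univ_of_forall fun z h1 h2 => absurd ⟨h1, h2⟩ h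
  refine ⟨fun l => ⋃ q : {q // r q = l}, W q, fun l => isOpen_iUnion fun q => hW q, ?_, fun l => ?_⟩
  · refine Set.eq_univ_of_forall fun z => ?_
    refine Set.mem_iUnion.mpr ⟨⟨r (A z), Nat.lt_succ_of_le (hr _)⟩, Set.mem_iUnion.mpr
      ⟨⟨A z, rfl⟩, hA z, Set.mem_iInter.mpr fun q' hq' hrq => ?_⟩⟩
    rw [Metric.infEDist_zero_of_mem (show z ∈ {w | A w = A z} from rfl),
      Metric.infEDist_pos_iff_notMem_closure]
    exact fun hz => (hcl z q' hz hq'.symm).ne hrq.symm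
  · refine HasMotionPlanningSection.iUnion (fun q => hW q) (fun p q hpq => ?_)
      fun q => (hs q).mono Set.inter_subset_left
    refine Set.disjoint_left.mpr fun z hp hq => ?_
    have hne : q.1 ≠ p.1 := fun h => hpq (Subtype.ext h.symm)
    have h1 := Set.mem_iInter.mp hp.2 q hne (q.2.trans p.2.symm)
    have h2 := Set.mem_iInter.mp hq.2 p hne.symm (p.2.trans q.2.symm)
    exact lt_asymm h1 h2

/-- A stratification of `X` with neighbourhoods of the strata which contract in `X` gives a motion
planning cover. -/
theorem hasTCCover_of_contractible_strata [PseudoMetricSpace X] {P : Type*} [Finite P] (r : P → ℕ)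
    (k : ℕ) (hr : ∀ p, r p ≤ k) (A : X → P) (U : P → Set X) (hU : ∀ p, IsOpen (U p))
    (hA : ∀ x, x ∈ U (A x))
    (hcl : ∀ x p, x ∈ closure {y | A y = p} → A x ≠ p → r (A x) < r p) (x₀ : X)
    (hc : ∀ p, ContinuousMap.Homotopic (⟨Subtype.val, continuous_subtype_val⟩ : C(U p, X))
      (ContinuousMap.const _ x₀)) : HasTCCover X (2 * k + 1) := by
  refine hasTCCover_of_strata (Q := P × P) (fun q => r q.1 + r q.2) (2 * k)
    (fun q => by have := hr q.1; have := hr q.2; omega) (fun z => (A z.1, A z.2))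
    (fun q => U q.1 ×ˢ U q.2) (fun q => (hU _).prod (hU _)) (fun z => ⟨hA _, hA _⟩) ?_
    (fun q => hasMotionPlanningSection_prod (hc _) (hc _))
  rintro ⟨x, y⟩ ⟨p, q⟩ hz hne
  have hset : {w : X × X | (A w.1, A w.2) = (p, q)} = {x | A x = p} ×ˢ {y | A y = q} := by
    ext w; simp
  rw [hset, closure_prod_eq] at hz
  have hle : ∀ x p, x ∈ closure {y | A y = p} → r (A x) ≤ r p := fun x p h => by
    by_cases e : A x = p
    · rw [e]
    · exact (hcl x p h e).le
  simp only [ne_eq, Prod.mk.injEq, not_and_or] at hne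
  rcases hne with hne | hne
  · exact add_lt_add_of_lt_of_le (hcl x p hz.1 hne) (hle y q hz.2)
  · exact add_lt_add_of_le_of_lt (hle x p hz.1) (hcl y q hz.2 hne)

end StrataCover

section ConfigurationStrata

variable {n : ℕ}

theorem confSpace_homotopic_of_segment {m : ℕ} {Y : Type*} [TopologicalSpace Y]
    (f g : C(Y, ConfSpace n m))
    (h : ∀ y, ∀ t : unitInterval, Function.Injective fun i =>
      (1 - (t : ℝ)) • (f y).1 i + (t : ℝ) • (g y).1 i) : f.Homotopic g := by
  refine ⟨⟨⟨fun z => ⟨fun i => (1 - (z.1 : ℝ)) • (f z.2).1 i + (z.1 : ℝ) • (g z.2).1 i, h z.2 z.1⟩,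
    ?_⟩, fun y => ?_, fun y => ?_⟩⟩
  · have hf : Continuous fun z : unitInterval × Y => (f z.2).1 :=
      continuous_subtype_val.comp (f.continuous.comp continuous_snd)
    have hg : Continuous fun z : unitInterval × Y => (g z.2).1 :=
      continuous_subtype_val.comp (g.continuous.comp continuous_snd)
    have ht : Continuous fun z : unitInterval × Y => (z.1 : ℝ) :=
      continuous_subtype_val.comp continuous_fst
    exact Continuous.subtype_mk (continuous_pi fun i =>
      ((continuous_const.sub ht).smul ((continuous_apply i).comp hf)).add
        (ht.smul ((continuous_apply i).comp hg))) _
  · exact Subtype.ext (by simp)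
  · exact Subtype.ext (by simp)

/-- The number of points of a configuration whose first coordinate is smaller than that of the
`i`-th point. -/
noncomputable def levelRank (C : ConfSpace n 3) (i : Fin n) : Fin n :=
  ⟨(Finset.univ.filter fun j => C.1 j 0 < C.1 i 0).card, by
    simpa using Finset.card_lt_univ_of_notMem
      (s := Finset.univ.filter fun j => C.1 j 0 < C.1 i 0) (x := i) (by simp)⟩

theorem levelRank_lt_iff (C : ConfSpace n 3) (i j : Fin n) :
    levelRank C i < levelRank C j ↔ C.1 i 0 < C.1 j 0 := by
  constructor
  · intro h
    by_contra! hle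
    refine absurd h (not_lt.mpr (Fin.mk_le_mk.mpr (Finset.card_le_card fun k hk => ?_)))
    simp only [Finset.mem_filter, Finset.mem_univ, true_and] at hk ⊢
    exact hk.trans_le hle
  · intro h
    refine Fin.mk_lt_mk.mpr (Finset.card_lt_card (Finset.ssubset_iff_of_subset
      (fun k hk => ?_) |>.mpr ⟨i, by simpa using h, by simp⟩))
    simp only [Finset.mem_filter, Finset.mem_univ, true_and] at hk ⊢
    exact hk.trans h

theorem levelRank_eq_of_lt_iff {C D : ConfSpace n 3}
    (h : ∀ i j, levelRank C i < levelRank C j ↔ levelRank D i < levelRank D j) :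
    levelRank C = levelRank D := by
  funext i
  simp only [levelRank_lt_iff] at h
  simp only [levelRank, h]

/-- The configurations whose points are distinguished by the first coordinates, if `p` takes
different values, and by the other coordinates otherwise. -/
def levelNhd (p : Fin n → Fin n) : Set (ConfSpace n 3) :=
  {C | (∀ i j, p i < p j → C.1 i 0 < C.1 j 0) ∧
    ∀ i j, i ≠ j → p i = p j → C.1 i 1 ≠ C.1 j 1 ∨ C.1 i 2 ≠ C.1 j 2}

theorem confSpace_continuous_coord (i : Fin n) (a : Fin 3) :
    Continuous fun C : ConfSpace n 3 => C.1 i a :=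
  (continuous_apply a).comp ((continuous_apply i).comp continuous_subtype_val)

theorem isOpen_levelNhd (p : Fin n → Fin n) : IsOpen (levelNhd p) := by
  have hc := confSpace_continuous_coord (n := n)
  simp only [levelNhd, Set.ofPred_and, Set.ofPred_forall, Set.ofPred_or]
  refine (isOpen_iInter_of_finite fun i => isOpen_iInter_of_finite fun j =>
    isOpen_iInter_of_finite fun _ => isOpen_lt (hc i 0) (hc j 0)).inter
    (isOpen_iInter_of_finite fun i => isOpen_iInter_of_finite fun j =>
    isOpen_iInter_of_finite fun _ => isOpen_iInter_of_finite fun _ =>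
    (isOpen_ne_fun (hc i 1) (hc j 1)).union (isOpen_ne_fun (hc i 2) (hc j 2)))

theorem mem_levelNhd_levelRank (C : ConfSpace n 3) : C ∈ levelNhd (levelRank C) := by
  refine ⟨fun i j h => (levelRank_lt_iff C i j).mp h, fun i j hij h => ?_⟩
  by_contra! hcon
  refine hij (C.2 (funext fun a => ?_))
  fin_cases a
  · have h1 := (levelRank_lt_iff C i j).not.mp h.not_lt
    have h2 := (levelRank_lt_iff C j i).not.mp h.not_gt
    exact le_antisymm (not_lt.mp h2) (not_lt.mp h1)
  · exact hcon.1
  · exact hcon.2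

theorem card_image_levelRank_lt {C : ConfSpace n 3} {q : Fin n → Fin n}
    (hC : C ∈ closure {D | levelRank D = q}) (hne : levelRank C ≠ q) :
    (Finset.univ.image (levelRank C)).card < (Finset.univ.image q).card := by
  have hopen : IsOpen {D : ConfSpace n 3 | ∀ i j, levelRank C i < levelRank C j →
      D.1 i 0 < D.1 j 0} := by
    simp only [Set.ofPred_forall]
    exact isOpen_iInter_of_finite fun i => isOpen_iInter_of_finite fun j =>
      isOpen_iInter_of_finite fun _ =>
      isOpen_lt (confSpace_continuous_coord i 0) (confSpace_continuous_coord j 0)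
  obtain ⟨D, hD, rfl⟩ := mem_closure_iff.mp hC _ hopen fun i j => (levelRank_lt_iff C i j).mp
  have hlt : ∀ i j, levelRank C i < levelRank C j → levelRank D i < levelRank D j :=
    fun i j h => (levelRank_lt_iff D i j).mpr (hD i j h)
  have hfac : (levelRank C).FactorsThrough (levelRank D) := by
    intro i j hij
    by_contra h
    rcases lt_or_gt_of_ne h with h | h
    · exact (hlt _ _ h).ne hij
    · exact (hlt _ _ h).ne' hij
  have hn : Nonempty (Fin n) := by
    by_contra h
    rw [not_nonempty_iff] at h
    exact hne (Subsingleton.elim _ _)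
  obtain ⟨e, he⟩ := (Function.factorsThrough_iff _).mp hfac
  rw [he, ← Finset.image_image]
  refine lt_of_le_of_ne Finset.card_image_le fun hcard => hne (levelRank_eq_of_lt_iff fun i j =>
    ⟨hlt i j, fun h => ?_⟩)
  rcases lt_trichotomy (levelRank C i) (levelRank C j) with h' | h' | h'
  · exact h'
  · rw [he] at h'
    exact absurd (Finset.card_image_iff.mp hcard (by simp) (by simp) h') h.ne
  · exact absurd (hlt _ _ h') h.not_gt

theorem homotopic_const_levelNhd (p : Fin n → Fin n) :
    ContinuousMap.Homotopic
      (⟨Subtype.val, continuous_subtype_val⟩ : C(levelNhd p, ConfSpace n 3))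
      (ContinuousMap.const _ ⟨fun i => ![0, (i : ℝ), 0], fun i j h => Fin.ext (by
        simpa using congrFun h 1)⟩) := by
  set x : Fin n → ℝ := fun i => n * (p i : ℕ) + (i : ℕ) with hx
  have hxlt : ∀ i j, p i < p j → x i < x j := by
    intro i j h
    have h1 : (p i : ℕ) + 1 ≤ (p j : ℕ) := h
    have h2 : n * ((p i : ℕ) + 1) ≤ n * (p j : ℕ) := Nat.mul_le_mul_left n h1
    have h3 := i.2
    have : n * (p i : ℕ) + (i : ℕ) < n * (p j : ℕ) + (j : ℕ) := by rw [mul_add] at h2; omega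
    simp only [hx]
    exact_mod_cast this
  have hxinj : Function.Injective x := by
    intro i j h
    rcases lt_trichotomy (p i) (p j) with h' | h' | h'
    · exact absurd h (hxlt _ _ h').ne
    · simp only [hx, h'] at h
      exact Fin.ext (by exact_mod_cast add_left_cancel h)
    · exact absurd h (hxlt _ _ h').ne'
  let g₁ : C(levelNhd p, ConfSpace n 3) :=
    ⟨fun C => ⟨fun i => ![x i, C.1.1 i 1, C.1.1 i 2], fun i j h => hxinj (congrFun h 0)⟩,
      Continuous.subtype_mk (continuous_pi fun i => continuous_pi fun a => by
        have hc := fun a => (confSpace_continuous_coord i a).comp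
          (continuous_subtype_val : Continuous (Subtype.val : levelNhd p → _))
        fin_cases a
        · exact continuous_const
        · exact hc 1
        · exact hc 2) _⟩
  let g₂ : C(levelNhd p, ConfSpace n 3) :=
    ContinuousMap.const _ ⟨fun i => ![x i, (i : ℝ), 0], fun i j h => hxinj (congrFun h 0)⟩
  refine (confSpace_homotopic_of_segment _ g₁ fun C t i j h => ?_).trans
    ((confSpace_homotopic_of_segment g₁ g₂ fun C t i j h => ?_).trans
      (confSpace_homotopic_of_segment g₂ _ fun C t i j h => ?_))
  · have h0 : (1 - (t : ℝ)) * C.1.1 i 0 + t * x i = (1 - (t : ℝ)) * C.1.1 j 0 + t * x j :=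
      congrFun h 0
    have h1 : (1 - (t : ℝ)) * C.1.1 i 1 + t * C.1.1 i 1 =
      (1 - (t : ℝ)) * C.1.1 j 1 + t * C.1.1 j 1 := congrFun h 1
    have h2 : (1 - (t : ℝ)) * C.1.1 i 2 + t * C.1.1 i 2 =
      (1 - (t : ℝ)) * C.1.1 j 2 + t * C.1.1 j 2 := congrFun h 2
    have hlt : ∀ i j, p i < p j →
        (1 - (t : ℝ)) * C.1.1 i 0 + t * x i < (1 - (t : ℝ)) * C.1.1 j 0 + t * x j := by
      intro i j hij
      have e1 := C.2.1 i j hij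
      have e2 := hxlt i j hij
      rcases t.2.1.eq_or_lt with ht | ht
      · rw [← ht]; simpa using e1
      · have := mul_lt_mul_of_pos_left e2 ht
        have := mul_le_mul_of_nonneg_left e1.le (sub_nonneg.mpr t.2.2)
        linarith
    by_contra hij
    rcases lt_trichotomy (p i) (p j) with h' | h' | h'
    · exact (hlt _ _ h').ne h0
    · rcases C.2.2 i j hij h' with h'' | h''
      · exact h'' (by linarith)
      · exact h'' (by linarith)
    · exact (hlt _ _ h').ne' h0
  · have h0 : (1 - (t : ℝ)) * x i + t * x i = (1 - (t : ℝ)) * x j + t * x j := congrFun h 0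
    exact hxinj (by linarith)
  · have h1 : (1 - (t : ℝ)) * (i : ℝ) + t * (i : ℝ) = (1 - (t : ℝ)) * (j : ℝ) + t * (j : ℝ) :=
      congrFun h 1
    have : (i : ℝ) = (j : ℝ) := by linarith
    exact Fin.ext (by exact_mod_cast this)

theorem hasTCCover_confSpace (m : ℕ) : HasTCCover (ConfSpace (m + 1) 3) (2 * m + 1) := by
  refine hasTCCover_of_contractible_strata
    (fun p : Fin (m + 1) → Fin (m + 1) => (Finset.univ.image p).card - 1) m (fun p => ?_)
    levelRank levelNhd isOpen_levelNhd mem_levelNhd_levelRank (fun C q hC hne => ?_) _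
    homotopic_const_levelNhd
  · have := Finset.card_le_univ (Finset.univ.image p)
    rw [Fintype.card_fin] at this
    omega
  · have h := card_image_levelRank_lt hC hne
    have : 0 < (Finset.univ.image (levelRank C)).card :=
      (Finset.univ_nonempty.image _).card_pos
    omega

end ConfigurationStrata

theorem HasTCCover.mono {X : Type*} [TopologicalSpace X] {k l : ℕ} (h : HasTCCover X k)
    (hkl : k ≤ l) : HasTCCover X l := by
  obtain ⟨U, hUo, hUc, hU⟩ := h
  have hempty : HasMotionPlanningSection X ∅ :=
    ⟨⟨fun p => p.2.elim, continuous_of_const fun p => p.2.elim⟩, fun p => p.2.elim⟩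
  refine ⟨fun i => if h : (i : ℕ) < k then U ⟨i, h⟩ else ∅, fun i => ?_, ?_, fun i => ?_⟩
  · dsimp only
    split_ifs
    · exact hUo _
    · exact isOpen_empty
  · refine Set.eq_univ_of_forall fun z => ?_
    obtain ⟨i, hi⟩ := Set.mem_iUnion.mp (hUc ▸ Set.mem_univ z)
    exact Set.mem_iUnion.mpr ⟨⟨i, i.2.trans_le hkl⟩, by simpa using hi⟩
  · dsimp only
    split_ifs
    · exact hU _
    · exact hempty

theorem topComplexity_eq_of_hasTCCover {X : Type*} [TopologicalSpace X] {k : ℕ}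
    (h : HasTCCover X (k + 1)) (h' : ¬ HasTCCover X k) : TopComplexity X = (k + 1 : ℕ) := by
  refine le_antisymm (sInf_le ⟨k + 1, rfl, h⟩) (le_sInf ?_)
  rintro _ ⟨l, rfl, hl⟩
  by_contra! hlt
  exact h' (hl.mono (Nat.lt_succ_iff.mp (by exact_mod_cast hlt)))

/-- the topological complexity of the configuration space of `n ≥ 2`
ordered distinct points in `ℝ³` equals `2n - 1`. -/
theorem tc_config_space_R3 (n : ℕ) (hn : 2 ≤ n) :
    TopComplexity (ConfSpace n 3) = (2 * n - 1 : ℕ) := by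
  obtain ⟨m, rfl⟩ : ∃ m, n = m + 1 := ⟨n - 1, by omega⟩
  rw [show 2 * (m + 1) - 1 = 2 * m + 1 by omega]
  exact topComplexity_eq_of_hasTCCover (hasTCCover_confSpace m)
    (mul_comm m 2 ▸ not_hasTCCover_confSpace m)
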